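/- Let n ≥ 4, let 0 < Z ≤ 2^n and set a = ⌊log_2 Z⌋. Let s and c be integers with 2^n - 2^s < c < 2^n - 2^{s-1} and s > a. Then the number of 2^n-periodic binary sequences S with odd Hamming weight in one period, L_1(S) = c, and L_{1;Z}(S) = c is exactly Z · 2^{c-1}. -/

import Mathlib

/-- Generating polynomial `S^N(x) = s_0 + s_1 x + ... + s_{N-1} x^{N-1}` of one period
of an `N`-periodic binary sequence. -/
noncomputable def genPoly {N : ℕ} (S : Fin N → ZMod 2) : Polynomial (ZMod 2) :=
  ∑ i : Fin N, Polynomial.C (S i) * Polynomial.X ^ (i : ℕ)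

/-- Linear complexity `L(S) = N - deg (gcd (1 - x^N, S^N(x)))`. -/
noncomputable def linComp {N : ℕ} (S : Fin N → ZMod 2) : ℕ :=
  N - (EuclideanDomain.gcd (1 - Polynomial.X ^ N) (genPoly S)).natDegree

/-- Hamming weight of one period of an `N`-periodic binary sequence. -/
def wt {N : ℕ} (T : Fin N → ZMod 2) : ℕ :=
  (Finset.univ.filter (fun i => T i ≠ 0)).card

/-- `k`-error linear complexity `L_{N,k}(S)`. -/
noncomputable def errLC {N : ℕ} (S : Fin N → ZMod 2) (k : ℕ) : ℕ :=
  sInf {c | ∃ T : Fin N → ZMod 2, wt T ≤ k ∧ linComp (S + T) = c}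

/-- `k`-error linear complexity with a zone of length `Z`: `L_{N,k;Z}(S)`. -/
noncomputable def errLCZone {N : ℕ} (S : Fin N → ZMod 2) (k Z : ℕ) : ℕ :=
  sInf {c | ∃ T : Fin N → ZMod 2, wt T ≤ k ∧ (∀ i : Fin N, Z ≤ (i : ℕ) → T i = 0) ∧
    linComp (S + T) = c}

/-- `E_1(j)`: the sequence whose only nonzero term in one period is a `1` at position `j`. -/
def E1 {N : ℕ} (j : Fin N) : Fin N → ZMod 2 :=
  fun i => if i = j then 1 else 0

/-!
Over `F_2` we have `1 - x^(2^n) = (x - 1)^(2^n)`, so `2^n - L(S)` is the multiplicity of `x - 1` in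
`S(x)`, capped at `2^n`. Hence `L(S + T) ≤ max (L(S)) (L(T))`, with equality if `L(S) ≠ L(T)`, and
`S` has odd weight iff `L(S) = 2^n`. If `i ≠ j` and `v` is the exponent of `2` in `i - j`, then
`E_i + E_j` has linear complexity `2^n - 2^v`; the window for `c` contains no such value, and the
value lies below `c` exactly when `i ≡ j` modulo `2^s`. Therefore the sequences to be counted are
the `R + E_i` with `L(R) = c` and `i < min(Z, 2^s)`, each obtained once, and there are `2^(c-1)`
choices of `R`.
-/

open Polynomial

section DivisibilityByPowers

theorem pow_dvd_iff_le_natDegree_gcd {F : Type*} [Field F] [DecidableEq F] (a : F) (f : F[X])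
    {m N : ℕ} (hm : m ≤ N) :
    (X - C a) ^ m ∣ f ↔ m ≤ (EuclideanDomain.gcd ((X - C a) ^ N) f).natDegree := by
  obtain ⟨d, -, hd⟩ := (dvd_prime_pow (prime_X_sub_C a) N).1
    (EuclideanDomain.gcd_dvd_left ((X - C a) ^ N) f)
  have natDegree_gcd : (EuclideanDomain.gcd ((X - C a) ^ N) f).natDegree = d := by
    rw [natDegree_eq_of_degree_eq (degree_eq_degree_of_associated hd), natDegree_pow,
      natDegree_X_sub_C, mul_one]
  have dvd_gcd_iff : (X - C a) ^ m ∣ f ↔ (X - C a) ^ m ∣ EuclideanDomain.gcd ((X - C a) ^ N) f :=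
    ⟨EuclideanDomain.dvd_gcd (pow_dvd_pow _ hm),
      fun h ↦ h.trans (EuclideanDomain.gcd_dvd_right _ _)⟩
  rw [natDegree_gcd, dvd_gcd_iff, hd.dvd_iff_dvd_right,
    pow_dvd_pow_iff (X_sub_C_ne_zero a) (prime_X_sub_C a).not_isUnit]

variable {R : Type*} [CommRing R] [IsDomain R] (p : ℕ) [Fact p.Prime] [CharP R p]

theorem rootMultiplicity_one_X_pow_sub_one {t : ℕ} (ht : t ≠ 0) :
    rootMultiplicity (1 : R) (X ^ t - 1) = p ^ padicValNat p t := by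
  obtain ⟨v, u, hu, rfl⟩ := Nat.exists_eq_pow_mul_and_not_dvd ht p (Fact.out : p.Prime).ne_one
  have hu0 : u ≠ 0 := by rintro rfl; exact hu (dvd_zero p)
  have factorization : (X : R[X]) ^ (p ^ v * u) - 1
      = (∑ i ∈ Finset.range u, X ^ i) ^ p ^ v * (X - C 1) ^ p ^ v := by
    rw [← mul_pow, C_1, geom_sum_mul, sub_pow_char_pow, one_pow, ← pow_mul, mul_comm]
  have geom_sum_not_root : ¬ IsRoot ((∑ i ∈ Finset.range u, (X : R[X]) ^ i) ^ p ^ v) 1 := by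
    simpa [IsRoot.def, eval_finsetSum, CharP.cast_eq_zero_iff R p u] using fun h ↦ absurd h hu
  have geom_sum_ne_zero : (∑ i ∈ Finset.range u, (X : R[X]) ^ i) ^ p ^ v ≠ 0 := by
    intro h
    simp [h] at geom_sum_not_root
  rw [factorization, rootMultiplicity_mul_X_sub_C_pow geom_sum_ne_zero,
    rootMultiplicity_eq_zero geom_sum_not_root, zero_add,
    padicValNat.mul (pow_ne_zero _ (Fact.out : p.Prime).ne_zero) hu0, padicValNat.prime_pow,
    padicValNat.eq_zero_of_not_dvd hu, add_zero]

theorem X_sub_one_pow_dvd_X_pow_sub_one_iff {s m : ℕ} (hlo : p ^ (s - 1) < m) (hhi : m ≤ p ^ s)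
    (t : ℕ) : (X - C 1 : R[X]) ^ m ∣ X ^ t - 1 ↔ p ^ s ∣ t := by
  rcases eq_or_ne t 0 with rfl | ht
  · simp
  have hp : 0 < p := (Fact.out : p.Prime).pos
  have hX : (X ^ t - 1 : R[X]) ≠ 0 := X_pow_sub_C_ne_zero (Nat.pos_of_ne_zero ht) 1
  rw [← le_rootMultiplicity_iff hX, rootMultiplicity_one_X_pow_sub_one p ht,
    padicValNat_dvd_iff_le ht]
  refine ⟨fun h ↦ ?_, fun h ↦ hhi.trans (Nat.pow_le_pow_right hp h)⟩
  by_contra! hv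
  exact (hlo.trans_le h).not_ge (Nat.pow_le_pow_right hp (Nat.le_sub_one_of_lt hv))

end DivisibilityByPowers

section Counting

theorem ncard_setOf_val_lt {k N : ℕ} (hk : k ≤ N) : {i : Fin N | (i : ℕ) < k}.ncard = k := by
  rw [Set.ncard_eq_toFinset_card', Set.toFinset_ofPred, Fin.card_filter_val_lt, min_eq_right hk]

variable {F : Type*} [Field F]

theorem ncard_degreeLT (N : ℕ) : (degreeLT F N : Set F[X]).ncard = Nat.card F ^ N :=
  (Nat.card_congr (degreeLTEquiv F N).toEquiv).trans (by simp [Nat.card_fun])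

theorem ncard_degreeLT_inter_dvd {q : F[X]} (hq : q ≠ 0) {N : ℕ} (hN : q.natDegree ≤ N) :
    (degreeLT F N ∩ {f | q ∣ f} : Set F[X]).ncard = Nat.card F ^ (N - q.natDegree) := by
  have mul_mem_iff (g : F[X]) : q * g ∈ degreeLT F N ↔ g ∈ degreeLT F (N - q.natDegree) := by
    rcases eq_or_ne g 0 with rfl | hg
    · simp
    rw [mem_degreeLT, mem_degreeLT, ← natDegree_lt_iff_degree_lt (mul_ne_zero hq hg),
      ← natDegree_lt_iff_degree_lt hg, natDegree_mul hq hg]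
    omega
  have eq_image : (degreeLT F N ∩ {f | q ∣ f} : Set F[X])
      = (q * ·) '' (degreeLT F (N - q.natDegree)) := by
    ext f
    constructor
    · rintro ⟨hf, g, rfl⟩
      exact ⟨g, (mul_mem_iff g).1 hf, rfl⟩
    · rintro ⟨g, hg, rfl⟩
      exact ⟨(mul_mem_iff g).2 hg, dvd_mul_right q g⟩
  rw [eq_image, Set.ncard_image_of_injective _ (mul_right_injective₀ hq), ncard_degreeLT]

end Counting

section Sequences

variable {N : ℕ}

theorem genPoly_eq_degreeLTEquiv_symm (S : Fin N → ZMod 2) :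
    genPoly S = ((degreeLTEquiv (ZMod 2) N).symm S : (ZMod 2)[X]) := by
  simp only [genPoly, C_mul_X_pow_eq_monomial]
  rfl

theorem genPoly_injective : Function.Injective (genPoly (N := N)) := by
  intro S T h
  simpa only [genPoly_eq_degreeLTEquiv_symm, Subtype.coe_inj, EmbeddingLike.apply_eq_iff_eq] using h

theorem range_genPoly : Set.range (genPoly (N := N)) = degreeLT (ZMod 2) N := by
  ext f
  simp only [Set.mem_range, genPoly_eq_degreeLTEquiv_symm]
  constructor
  · rintro ⟨S, rfl⟩
    exact Subtype.coe_prop _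
  · exact fun hf ↦ ⟨degreeLTEquiv (ZMod 2) N ⟨f, hf⟩, by simp⟩

theorem genPoly_add (S T : Fin N → ZMod 2) : genPoly (S + T) = genPoly S + genPoly T := by
  simp only [genPoly_eq_degreeLTEquiv_symm, map_add, Submodule.coe_add]

theorem genPoly_E1 (j : Fin N) : genPoly (E1 j) = X ^ (j : ℕ) := by
  simp [genPoly, E1]

theorem eval_one_genPoly (S : Fin N → ZMod 2) : (genPoly S).eval 1 = wt S := by
  have eq_ite (x : ZMod 2) : x = if x ≠ 0 then 1 else 0 := by
    revert x
    decide
  simp only [genPoly, wt, eval_finsetSum, eval_mul, eval_C, eval_pow, eval_X, one_pow, mul_one,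
    Finset.card_filter, Nat.cast_sum, Nat.cast_ite, Nat.cast_one, Nat.cast_zero]
  exact Finset.sum_congr rfl fun i _ ↦ eq_ite (S i)

theorem odd_wt_iff_not_dvd (S : Fin N → ZMod 2) : Odd (wt S) ↔ ¬ (X - C 1) ∣ genPoly S := by
  rw [dvd_iff_isRoot, IsRoot.def, eval_one_genPoly, ← ZMod.natCast_ne_zero_iff_odd]

theorem wt_zero : wt (0 : Fin N → ZMod 2) = 0 := by
  simp [wt]

theorem wt_E1 (j : Fin N) : wt (E1 j) = 1 := by
  simp [wt, E1, Finset.filter_eq']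

theorem eq_zero_or_eq_E1_of_wt_le_one {T : Fin N → ZMod 2} (hT : wt T ≤ 1) :
    T = 0 ∨ ∃ j, T = E1 j := by
  refine or_iff_not_imp_left.2 fun hT0 ↦ ?_
  obtain ⟨j, hj⟩ := Function.ne_iff.1 hT0
  refine ⟨j, funext fun i ↦ ?_⟩
  rcases eq_or_ne i j with rfl | hij
  · exact (Fin.eq_one_of_ne_zero (T i) hj).trans (if_pos rfl).symm
  · simp only [E1, if_neg hij]
    by_contra hi
    exact hij (Finset.card_le_one.1 hT i (by simpa using hi) j (by simpa using hj))

theorem E1_vanishes_from_iff {j : Fin N} {Z : ℕ} :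
    (∀ i : Fin N, Z ≤ (i : ℕ) → E1 j i = 0) ↔ (j : ℕ) < Z := by
  refine ⟨fun h ↦ ?_, fun hj i hi ↦ if_neg fun hij ↦ ?_⟩
  · by_contra! hj
    simpa [E1] using h j hj
  · subst hij
    omega

end Sequences

section LinearComplexity

variable {n : ℕ} {S T : Fin (2 ^ n) → ZMod 2}

theorem linComp_le_iff (S : Fin (2 ^ n) → ZMod 2) (c : ℕ) :
    linComp S ≤ c ↔ (X - C 1) ^ (2 ^ n - c) ∣ genPoly S := by
  have one_sub_X_pow : (1 - X ^ 2 ^ n : (ZMod 2)[X]) = (X - C 1) ^ 2 ^ n := by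
    rw [C_1, sub_pow_char_pow, one_pow, CharTwo.sub_eq_add, CharTwo.sub_eq_add, add_comm]
  rw [pow_dvd_iff_le_natDegree_gcd 1 (genPoly S) (Nat.sub_le _ c), ← one_sub_X_pow, linComp]
  omega

theorem linComp_le (S : Fin (2 ^ n) → ZMod 2) : linComp S ≤ 2 ^ n :=
  Nat.sub_le _ _

theorem linComp_eq_two_pow_iff : linComp S = 2 ^ n ↔ Odd (wt S) := by
  have hN : 2 ^ n - (2 ^ n - 1) = 1 := Nat.sub_sub_self Nat.one_le_two_pow
  have not_le_iff := (linComp_le_iff S (2 ^ n - 1)).not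
  rw [hN, pow_one, ← odd_wt_iff_not_dvd] at not_le_iff
  rw [← not_le_iff]
  have := linComp_le S
  have := Nat.one_le_two_pow (n := n)
  omega

theorem linComp_E1 (j : Fin (2 ^ n)) : linComp (E1 j) = 2 ^ n :=
  linComp_eq_two_pow_iff.2 (wt_E1 j ▸ odd_one)

theorem linComp_add_le (S T : Fin (2 ^ n) → ZMod 2) :
    linComp (S + T) ≤ max (linComp S) (linComp T) := by
  rw [linComp_le_iff, genPoly_add]
  exact dvd_add ((linComp_le_iff S _).1 (le_max_left _ _))
    ((linComp_le_iff T _).1 (le_max_right _ _))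

theorem linComp_add_of_ne (h : linComp S ≠ linComp T) :
    linComp (S + T) = max (linComp S) (linComp T) := by
  have hST := linComp_add_le S T
  have hS := linComp_add_le (S + T) T
  have hT := linComp_add_le S (S + T)
  rw [add_assoc, ZModModule.add_self, add_zero] at hS
  rw [← add_assoc, ZModModule.add_self, zero_add] at hT
  omega

theorem ncard_linComp_le {c : ℕ} (hc : c ≤ 2 ^ n) :
    {S : Fin (2 ^ n) → ZMod 2 | linComp S ≤ c}.ncard = 2 ^ c := by
  have image_genPoly : genPoly '' {S : Fin (2 ^ n) → ZMod 2 | linComp S ≤ c}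
      = (degreeLT (ZMod 2) (2 ^ n) ∩ {f | (X - C 1) ^ (2 ^ n - c) ∣ f} : Set (ZMod 2)[X]) := by
    simp only [linComp_le_iff, ← range_genPoly]
    exact Set.image_preimage_eq_range_inter (f := genPoly) (t := {f | _ ∣ f})
  have natDegree_eq : ((X - C 1 : (ZMod 2)[X]) ^ (2 ^ n - c)).natDegree = 2 ^ n - c := by
    rw [natDegree_pow, natDegree_X_sub_C, mul_one]
  rw [← Set.ncard_image_of_injective _ genPoly_injective, image_genPoly,
    ncard_degreeLT_inter_dvd (pow_ne_zero _ (X_sub_C_ne_zero 1))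
      (natDegree_eq.trans_le (Nat.sub_le _ _)),
    natDegree_eq, Nat.card_zmod, Nat.sub_sub_self hc]

theorem ncard_linComp_eq {c : ℕ} (hc0 : 0 < c) (hc : c ≤ 2 ^ n) :
    {S : Fin (2 ^ n) → ZMod 2 | linComp S = c}.ncard = 2 ^ (c - 1) := by
  have eq_diff : {S : Fin (2 ^ n) → ZMod 2 | linComp S = c}
      = {S | linComp S ≤ c} \ {S | linComp S ≤ c - 1} := by
    ext S
    simp only [Set.mem_ofPred_eq, Set.mem_sdiff]
    omega
  have subset : {S : Fin (2 ^ n) → ZMod 2 | linComp S ≤ c - 1} ⊆ {S | linComp S ≤ c} :=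
    fun S hS ↦ le_trans hS (Nat.sub_le c 1)
  rw [eq_diff, Set.ncard_sdiff subset, ncard_linComp_le hc,
    ncard_linComp_le ((Nat.sub_le c 1).trans hc), ← Nat.two_pow_pred_add_two_pow_pred hc0,
    Nat.add_sub_cancel]

end LinearComplexity

section OneError

variable {n s c : ℕ}

theorem linComp_E1_add_E1_le_iff (hlo : 2 ^ n - 2 ^ s ≤ c) (hhi : c < 2 ^ n - 2 ^ (s - 1))
    (i j : Fin (2 ^ n)) : linComp (E1 i + E1 j) ≤ c ↔ i ≡ j [MOD 2 ^ s] := by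
  wlog hij : (i : ℕ) ≤ j generalizing i j
  · rw [add_comm, this j i (le_of_not_ge hij), Nat.ModEq.comm]
  have genPoly_add_E1 : genPoly (E1 i + E1 j) = X ^ (i : ℕ) * (X ^ (j - i : ℕ) - 1) := by
    rw [genPoly_add, genPoly_E1, genPoly_E1, mul_sub, ← pow_add, Nat.add_sub_cancel' hij, mul_one,
      CharTwo.sub_eq_add, add_comm]
  have isCoprime : IsCoprime ((X - C 1 : (ZMod 2)[X]) ^ (2 ^ n - c)) (X ^ (i : ℕ)) :=
    IsCoprime.pow ⟨-1, 1, by rw [C_1]; ring⟩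
  have dvd_mul_iff (f : (ZMod 2)[X]) :
      (X - C 1) ^ (2 ^ n - c) ∣ X ^ (i : ℕ) * f ↔ (X - C 1) ^ (2 ^ n - c) ∣ f :=
    ⟨isCoprime.dvd_of_dvd_mul_left, fun h ↦ h.mul_left _⟩
  rw [linComp_le_iff, genPoly_add_E1, dvd_mul_iff,
    X_sub_one_pow_dvd_X_pow_sub_one_iff 2 (lt_tsub_comm.1 hhi) (tsub_le_iff_tsub_le.1 hlo),
    Nat.modEq_iff_dvd' hij]

theorem linComp_E1_add_E1_lt_iff (hlo : 2 ^ n - 2 ^ s < c) (hhi : c < 2 ^ n - 2 ^ (s - 1))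
    (i j : Fin (2 ^ n)) : linComp (E1 i + E1 j) < c ↔ i ≡ j [MOD 2 ^ s] := by
  rw [← linComp_E1_add_E1_le_iff (c := c - 1) (by omega) (by omega)]
  omega

theorem linComp_E1_add_E1_ne (hlo : 2 ^ n - 2 ^ s < c) (hhi : c < 2 ^ n - 2 ^ (s - 1))
    (i j : Fin (2 ^ n)) : linComp (E1 i + E1 j) ≠ c := by
  intro h
  have le_iff_lt := (linComp_E1_add_E1_le_iff hlo.le hhi i j).trans
    (linComp_E1_add_E1_lt_iff hlo hhi i j).symm
  omega

theorem linComp_eq_two_pow_of_linComp_add_E1_lt {S : Fin (2 ^ n) → ZMod 2} {i : Fin (2 ^ n)}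
    (h : linComp (S + E1 i) < 2 ^ n) : linComp S = 2 ^ n := by
  have := linComp_add_of_ne (h.trans_eq (linComp_E1 i).symm).ne
  rwa [add_assoc, ZModModule.add_self, add_zero, linComp_E1, max_eq_right h.le] at this

theorem linComp_add_E1_eq_max {S : Fin (2 ^ n) → ZMod 2} (hlo : 2 ^ n - 2 ^ s < c)
    (hhi : c < 2 ^ n - 2 ^ (s - 1)) {i : Fin (2 ^ n)} (hS : linComp (S + E1 i) = c)
    (j : Fin (2 ^ n)) : linComp (S + E1 j) = max c (linComp (E1 i + E1 j)) := by
  rw [← ZModModule.add_add_add_cancel S (E1 i) (E1 j), ← hS]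
  exact linComp_add_of_ne (hS ▸ (linComp_E1_add_E1_ne hlo hhi i j).symm)

theorem le_linComp_add_of_wt_le_one {S T : Fin (2 ^ n) → ZMod 2} (hlo : 2 ^ n - 2 ^ s < c)
    (hhi : c < 2 ^ n - 2 ^ (s - 1)) {i : Fin (2 ^ n)} (hS : linComp (S + E1 i) = c)
    (hT : wt T ≤ 1) : c ≤ linComp (S + T) := by
  rcases eq_zero_or_eq_E1_of_wt_le_one hT with rfl | ⟨j, rfl⟩
  · have hc : c < 2 ^ n := hhi.trans_le (Nat.sub_le _ _)
    rw [add_zero, linComp_eq_two_pow_of_linComp_add_E1_lt (hS.trans_lt hc)]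
    exact hc.le
  · exact (linComp_add_E1_eq_max hlo hhi hS j).symm ▸ le_max_left _ _

theorem errLC_one_eq {S : Fin (2 ^ n) → ZMod 2} (hlo : 2 ^ n - 2 ^ s < c)
    (hhi : c < 2 ^ n - 2 ^ (s - 1)) {i : Fin (2 ^ n)} (hS : linComp (S + E1 i) = c) :
    errLC S 1 = c := by
  refine IsLeast.csInf_eq ⟨⟨E1 i, (wt_E1 i).le, hS⟩, ?_⟩
  rintro _ ⟨T, hT, rfl⟩
  exact le_linComp_add_of_wt_le_one hlo hhi hS hT

theorem errLCZone_one_eq {S : Fin (2 ^ n) → ZMod 2} {Z : ℕ} (hlo : 2 ^ n - 2 ^ s < c)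
    (hhi : c < 2 ^ n - 2 ^ (s - 1)) {i : Fin (2 ^ n)} (hi : (i : ℕ) < Z)
    (hS : linComp (S + E1 i) = c) : errLCZone S 1 Z = c := by
  refine IsLeast.csInf_eq ⟨⟨E1 i, (wt_E1 i).le, E1_vanishes_from_iff.2 hi, hS⟩, ?_⟩
  rintro _ ⟨T, hT, -, rfl⟩
  exact le_linComp_add_of_wt_le_one hlo hhi hS hT

theorem exists_linComp_add_E1_eq_errLCZone_one {N Z : ℕ} {S : Fin N → ZMod 2}
    (h : errLCZone S 1 Z ≠ linComp S) :
    ∃ j : Fin N, (j : ℕ) < Z ∧ linComp (S + E1 j) = errLCZone S 1 Z := by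
  obtain ⟨T, hT, hTZ, hL⟩ : errLCZone S 1 Z ∈ {c | ∃ T : Fin N → ZMod 2, wt T ≤ 1 ∧
      (∀ i : Fin N, Z ≤ (i : ℕ) → T i = 0) ∧ linComp (S + T) = c} :=
    Nat.sInf_mem ⟨_, 0, by simp [wt_zero], by simp, rfl⟩
  rcases eq_zero_or_eq_E1_of_wt_le_one hT with rfl | ⟨j, rfl⟩
  · exact absurd (by rw [← hL, add_zero]) h
  · exact ⟨j, E1_vanishes_from_iff.1 hTZ, hL⟩

-- A correction at position `j` may be moved to position `j % 2 ^ s`: this changes `S + E1 j` by a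
-- sequence of linear complexity below `c`.
theorem odd_wt_and_errLC_eq_and_errLCZone_eq_iff {S : Fin (2 ^ n) → ZMod 2} {Z : ℕ}
    (hlo : 2 ^ n - 2 ^ s < c) (hhi : c < 2 ^ n - 2 ^ (s - 1)) :
    Odd (wt S) ∧ errLC S 1 = c ∧ errLCZone S 1 Z = c ↔
      ∃ i : Fin (2 ^ n), (i : ℕ) < min Z (2 ^ s) ∧ linComp (S + E1 i) = c := by
  constructor
  · rintro ⟨hodd, -, rfl⟩
    have hS : linComp S = 2 ^ n := linComp_eq_two_pow_iff.2 hodd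
    obtain ⟨j, hjZ, hj⟩ := exists_linComp_add_E1_eq_errLCZone_one
      ((hhi.trans_le (Nat.sub_le _ _)).trans_eq hS.symm).ne
    have hle : (j % 2 ^ s : ℕ) ≤ j := Nat.mod_le _ _
    let i : Fin (2 ^ n) := ⟨j % 2 ^ s, hle.trans_lt j.isLt⟩
    have hlt : linComp (E1 j + E1 i) < errLCZone S 1 Z :=
      (linComp_E1_add_E1_lt_iff hlo hhi j i).2 (Nat.mod_modEq _ _).symm
    exact ⟨i, lt_min (hle.trans_lt hjZ) (Nat.mod_lt _ (by positivity)),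
      (linComp_add_E1_eq_max hlo hhi hj i).trans (max_eq_left hlt.le)⟩
  · rintro ⟨i, hi, hS⟩
    have hlt : linComp (S + E1 i) < 2 ^ n := hS.trans_lt (hhi.trans_le (Nat.sub_le _ _))
    exact ⟨linComp_eq_two_pow_iff.1 (linComp_eq_two_pow_of_linComp_add_E1_lt hlt),
      errLC_one_eq hlo hhi hS,
      errLCZone_one_eq hlo hhi (hi.trans_le (min_le_left _ _)) hS⟩

theorem setOf_odd_wt_and_errLC_eq_and_errLCZone_eq (Z : ℕ) (hlo : 2 ^ n - 2 ^ s < c)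
    (hhi : c < 2 ^ n - 2 ^ (s - 1)) :
    {S : Fin (2 ^ n) → ZMod 2 | Odd (wt S) ∧ errLC S 1 = c ∧ errLCZone S 1 Z = c}
      = (fun q : Fin (2 ^ n) × (Fin (2 ^ n) → ZMod 2) ↦ q.2 + E1 q.1) ''
        ({i : Fin (2 ^ n) | (i : ℕ) < min Z (2 ^ s)} ×ˢ {R | linComp R = c}) := by
  ext S
  rw [Set.mem_ofPred_eq, odd_wt_and_errLC_eq_and_errLCZone_eq_iff hlo hhi]
  constructor
  · rintro ⟨i, hi, hS⟩
    exact ⟨(i, S + E1 i), ⟨hi, hS⟩, by simp [add_assoc, ZModModule.add_self]⟩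
  · rintro ⟨⟨i, R⟩, ⟨hi, hR⟩, rfl⟩
    exact ⟨i, hi, by simpa [add_assoc, ZModModule.add_self] using hR⟩

theorem injOn_add_E1 (hlo : 2 ^ n - 2 ^ s ≤ c) (hhi : c < 2 ^ n - 2 ^ (s - 1)) :
    Set.InjOn (fun q : Fin (2 ^ n) × (Fin (2 ^ n) → ZMod 2) ↦ q.2 + E1 q.1)
      ({i : Fin (2 ^ n) | (i : ℕ) < 2 ^ s} ×ˢ {R | linComp R = c}) := by
  rintro ⟨i, R⟩ ⟨hi : (i : ℕ) < 2 ^ s, hR : linComp R = c⟩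
    ⟨j, R'⟩ ⟨hj : (j : ℕ) < 2 ^ s, hR' : linComp R' = c⟩ (h : R + E1 i = R' + E1 j)
  have E1_add_E1 : E1 i + E1 j = R + R' := calc
    E1 i + E1 j = (R + E1 i) + (E1 j + R) := by
      rw [add_comm R, add_comm (E1 j), ZModModule.add_add_add_cancel]
    _ = R + R' := by rw [h, ZModModule.add_add_add_cancel, add_comm]
  have hle : linComp (E1 i + E1 j) ≤ c := by
    simpa only [E1_add_E1, hR, hR', max_self] using linComp_add_le R R'
  obtain rfl : i = j :=
    Fin.ext (((linComp_E1_add_E1_le_iff hlo hhi i j).1 hle).eq_of_lt_of_lt hi hj)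
  rw [add_right_cancel h]

end OneError

theorem stmt10_general (n Z s c : ℕ) (h1 : 2 ^ n - 2 ^ s < c)
    (h2 : c < 2 ^ n - 2 ^ (s - 1)) :
    {S : Fin (2 ^ n) → ZMod 2 | Odd (wt S) ∧ errLC S 1 = c ∧ errLCZone S 1 Z = c}.ncard
      = min Z (2 ^ s) * 2 ^ (c - 1) := by
  have hsn : 2 ^ s ≤ 2 ^ n := by
    have : s - 1 < n := (Nat.pow_lt_pow_iff_right one_lt_two).1 (by omega)
    exact Nat.pow_le_pow_right two_pos (by omega)
  have positions_subset : {i : Fin (2 ^ n) | (i : ℕ) < min Z (2 ^ s)} ⊆ {i | (i : ℕ) < 2 ^ s} :=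
    fun i hi ↦ lt_of_lt_of_le hi (min_le_right Z (2 ^ s))
  have injOn := (injOn_add_E1 h1.le h2).mono (Set.prod_mono_left positions_subset)
  rw [setOf_odd_wt_and_errLC_eq_and_errLCZone_eq Z h1 h2, injOn.ncard_image, Set.ncard_prod,
    ncard_setOf_val_lt ((min_le_right _ _).trans hsn),
    ncard_linComp_eq (Nat.zero_lt_of_lt h1) (h2.le.trans (Nat.sub_le _ _))]

/-- Case `s > a`: exactly `Z · 2^{c-1}` odd-weight sequences with `L_1(S) = c`
satisfy `L_{1;Z}(S) = c`. -/
theorem stmt10 (n Z s c : ℕ) (hn : 4 ≤ n) (hZ0 : 0 < Z) (hZ : Z ≤ 2^n)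
    (h1 : 2^n - 2^s < c) (h2 : c < 2^n - 2^(s-1)) (hsa : Nat.log 2 Z < s) :
    {S : Fin (2^n) → ZMod 2 | Odd (wt S) ∧ errLC S 1 = c ∧ errLCZone S 1 Z = c}.ncard
      = Z * 2^(c - 1) := by
  have hZs : Z ≤ 2 ^ s := (Nat.lt_pow_of_log_lt one_lt_two hsa).le
  rw [stmt10_general n Z s c h1 h2, min_eq_left hZs]
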